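/- The average differential entropy satisfies h(X|W) = n·ln(σ√(2πe)) + (n/2)·(q/(q−1))·μ + S, where S = −E_u[ ln( (1/q)·Σ_{l=1}^q exp(−(μ/2)·(G_l + 2δ_{ql}T)) ) ]. -/

import Mathlib

open MeasureTheory ProbabilityTheory Real Finset

noncomputable section

/-- `λ_j = ((μ−1) + (−1)^{j+1}·√(μ²−(4/q−2)μ+1))/2` for `j ∈ {1,2}`. -/
def lamJ (q : ℕ) (μ : ℝ) (j : ℕ) : ℝ :=
  ((μ - 1) + (-1 : ℝ) ^ (j + 1) * Real.sqrt (μ ^ 2 - (4 / (q : ℝ) - 2) * μ + 1)) / 2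

/-- `m_j = λ_j + 1`. -/
def mJ (q : ℕ) (μ : ℝ) (j : ℕ) : ℝ := lamJ q μ j + 1

/-- `x_j = 1 − q·m_j`. -/
def xJ (q : ℕ) (μ : ℝ) (j : ℕ) : ℝ := 1 - (q : ℝ) * mJ q μ j

/-- `α_i ∈ ℝ^q` (1-based `i` and 1-based coordinate index as in the paper). -/
def alphaVec (q i : ℕ) : Fin q → ℝ :=
  fun k => (Real.sqrt ((i : ℝ) * ((i : ℝ) + 1)))⁻¹ *
    (if (k : ℕ) + 1 < i + 1 then 1
     else if (k : ℕ) + 1 = i + 1 then -(i : ℝ)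
     else 0)

/-- `α_{m,l}` extended by `0` for `m ∈ {q−1, q}`, as a function of the (1-based)
eigenvector index `m` (encoded as `m : Fin q`) and the component index `l : Fin q`. -/
def omegaVec (q : ℕ) (l : Fin q) : Fin q → ℝ :=
  fun m => if (m : ℕ) < q - 2 then alphaVec q ((m : ℕ) + 1) l else 0

/-- `d_k = 1` for `k ≤ q−2`, `d_{q−1} = m_1`, `d_q = m_2` (1-based `k`). -/
def dCoef (q : ℕ) (μ : ℝ) (k : Fin q) : ℝ :=
  if (k : ℕ) < q - 2 then 1
  else if (k : ℕ) = q - 2 then mJ q μ 1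
  else mJ q μ 2

/-- The law of `u = (u_{k,i})` with independent centered Gaussian components,
`u_{k,i}` having variance `d_k⁻¹`. -/
def measU (q n : ℕ) (μ : ℝ) : Measure (Fin q → Fin n → ℝ) :=
  Measure.pi fun k : Fin q =>
    Measure.pi fun _ : Fin n => gaussianReal 0 (Real.toNNReal (dCoef q μ k)⁻¹)

/-!
A sample of the mixture is a center plus Gaussian noise, and by exchangeability of the centers one
may assume that it comes from the last one. Then `h(X|W)` is minus the expectation of the logarithm
of the averaged Gaussian density at the displacements `w_q + y - w_l`. These form a Gaussian array
with independent columns, whose column covariance, in units of `s²`, has the eigenvectors `α_i`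
with eigenvalue `1` and `(1, …, 1, x_j)` with eigenvalue `1 / m_j`. In the coordinates `u` of this
eigenbasis the squared norm of the `l`-th displacement is a form independent of `l` plus
`G_l + 2 δ_{ql} T`. The former factors out of the average, and its expectation
`n (1 / μ + q / (q - 1))` produces the leading terms.
-/

open scoped NNReal Matrix

section GaussianRows

variable {ι τ κ ρ : Type*} [Fintype ι] [Fintype τ]

/-- The array whose row `l` is the linear combination `∑ k, A l k • u k` of the rows of `u`. -/
def combineRows (A : Matrix ρ ι ℝ) (u : ι → κ → ℝ) : ρ → κ → ℝ :=
  fun l i => ∑ k, A l k * u k i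

lemma continuous_combineRows (A : Matrix ρ ι ℝ) :
    Continuous (combineRows A : (ι → κ → ℝ) → ρ → κ → ℝ) := by
  unfold combineRows; fun_prop

variable [Fintype κ]

lemma map_sum_pi_gaussianReal (v : ι → ℝ≥0) :
    (Measure.pi fun i => gaussianReal 0 (v i)).map (fun x => ∑ i, x i) =
      gaussianReal 0 (∑ i, v i) := by
  have : IsProbabilityMeasure
      ((Measure.pi fun i => gaussianReal 0 (v i)).map (fun x => ∑ i, x i)) :=
    Measure.isProbabilityMeasure_map (by fun_prop)
  refine Measure.ext_of_charFun (funext fun t => ?_)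
  calc charFun ((Measure.pi fun i => gaussianReal 0 (v i)).map (fun x => ∑ i, x i)) t
      = ∫ x, ∏ i, Complex.exp (t * x i * Complex.I) ∂Measure.pi fun i => gaussianReal 0 (v i) := by
        rw [charFun_apply_real, integral_map (by fun_prop) (by fun_prop)]
        simp_rw [Complex.ofReal_sum, mul_sum, sum_mul, Complex.exp_sum]
    _ = ∏ i, charFun (gaussianReal 0 (v i)) t := by
        simp_rw [charFun_apply_real]
        exact integral_fintype_prod_eq_prod fun _ (x : ℝ) => Complex.exp (t * x * Complex.I)
    _ = charFun (gaussianReal 0 (∑ i, v i)) t := by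
        simp_rw [charFun_gaussianReal, ← Complex.exp_sum, sum_sub_distrib, ← sum_div, ← sum_mul]
        push_cast
        simp

lemma map_sum_pi_eq_gaussianReal {E : ι → Type*} [∀ i, MeasurableSpace (E i)]
    {ν : ∀ i, Measure (E i)} [∀ i, IsProbabilityMeasure (ν i)] {f : ∀ i, E i → ℝ}
    (hf : ∀ i, Measurable (f i)) {v : ι → ℝ≥0} (hv : ∀ i, (ν i).map (f i) = gaussianReal 0 (v i)) :
    (Measure.pi ν).map (fun x => ∑ i, f i (x i)) = gaussianReal 0 (∑ i, v i) := by
  have : ∀ i, SigmaFinite ((ν i).map (f i)) := fun i => by rw [hv]; infer_instance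
  rw [← map_sum_pi_gaussianReal]
  simp_rw [← hv]
  rw [← Measure.pi_map_pi fun i => (hf i).aemeasurable,
    Measure.map_map (by fun_prop) (by fun_prop)]
  rfl

/-- The centered Gaussian law on `κ → ℝ` with covariance `v • 1`. -/
def isoGaussian (κ : Type*) [Fintype κ] (v : ℝ≥0) : Measure (κ → ℝ) :=
  Measure.pi fun _ => gaussianReal 0 v

instance (v : ℝ≥0) : IsProbabilityMeasure (isoGaussian κ v) := by
  unfold isoGaussian; infer_instance

/-- The law of an array with independent rows indexed by `ι`, the entries of row `k` being
independent centered Gaussians of variance `v k`. -/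
def gaussianRows (κ : Type*) [Fintype κ] (v : ι → ℝ≥0) : Measure (ι → κ → ℝ) :=
  Measure.pi fun k => isoGaussian κ (v k)

instance (v : ι → ℝ≥0) : IsProbabilityMeasure (gaussianRows κ v) := by
  unfold gaussianRows; infer_instance

lemma gaussianRows_map_sum_mul (v : ι → ℝ≥0) (b : ι → κ → ℝ) :
    (gaussianRows κ v).map (fun u => ∑ k, ∑ i, b k i * u k i) =
      gaussianReal 0 (∑ k, ∑ i, (b k i ^ 2).toNNReal * v k) := by
  refine map_sum_pi_eq_gaussianReal (f := fun k (r : κ → ℝ) => ∑ i, b k i * r i)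
    (by fun_prop) fun k => ?_
  refine map_sum_pi_eq_gaussianReal (f := fun i (y : ℝ) => b k i * y) (by fun_prop) fun i => ?_
  rw [gaussianReal_map_const_mul, mul_zero]
  congr 2
  exact (Real.toNNReal_of_nonneg _).symm

lemma gaussianRows_map_sum_mul_apply (v : ι → ℝ≥0) (a : ι → ℝ) (i : κ) :
    (gaussianRows κ v).map (fun u => ∑ k, a k * u k i) =
      gaussianReal 0 (∑ k, (a k ^ 2).toNNReal * v k) := by
  classical
  convert gaussianRows_map_sum_mul v (fun k => Pi.single i (a k)) using 2
  · simp [Pi.single_apply]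
  · simp [Pi.single_apply, ite_pow, apply_ite]

lemma integrable_sq_gaussianReal (v : ℝ≥0) : Integrable (fun x => x ^ 2) (gaussianReal 0 v) :=
  (memLp_id_gaussianReal 2).integrable_sq

lemma integral_sq_gaussianReal (v : ℝ≥0) : ∫ x, x ^ 2 ∂gaussianReal 0 v = v := by
  rw [← variance_id_gaussianReal (μ := 0) (v := v),
    variance_of_integral_eq_zero aemeasurable_id integral_id_gaussianReal]
  rfl

lemma integrable_sq_sum_mul_gaussianRows (v : ι → ℝ≥0) (a : ι → ℝ) (i : κ) :
    Integrable (fun u => (∑ k, a k * u k i) ^ 2) (gaussianRows κ v) := by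
  have h := integrable_sq_gaussianReal (∑ k, (a k ^ 2).toNNReal * v k)
  rw [← gaussianRows_map_sum_mul_apply v a i] at h
  exact h.comp_measurable (by fun_prop)

lemma integral_sq_sum_mul_gaussianRows (v : ι → ℝ≥0) (a : ι → ℝ) (i : κ) :
    ∫ u, (∑ k, a k * u k i) ^ 2 ∂gaussianRows κ v = ∑ k, a k ^ 2 * v k := by
  have hmeas : Measurable fun u : ι → κ → ℝ => ∑ k, a k * u k i := by fun_prop
  have h := integral_sq_gaussianReal (∑ k, (a k ^ 2).toNNReal * v k)
  rw [← gaussianRows_map_sum_mul_apply v a i,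
    integral_map hmeas.aemeasurable (by fun_prop)] at h
  simpa [Real.toNNReal_of_nonneg, sq_nonneg] using h

instance [Finite ρ] (A : Matrix ρ ι ℝ) (v : ι → ℝ≥0) :
    IsProbabilityMeasure ((gaussianRows κ v).map (combineRows A)) :=
  Measure.isProbabilityMeasure_map (continuous_combineRows A).aemeasurable

lemma dual_apply_eq_sum [Fintype ρ] [DecidableEq ρ] [DecidableEq κ] (L : StrongDual ℝ (ρ → κ → ℝ))
    (z : ρ → κ → ℝ) : L z = ∑ l, ∑ i, L (Pi.single l (Pi.single i 1)) * z l i := by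
  have hz : z = ∑ l, ∑ i, z l i • Pi.single l (Pi.single i (1 : ℝ)) := by
    ext l i
    simp [Finset.sum_apply, Pi.single_apply, apply_ite (fun r : κ → ℝ => r i)]
  conv_lhs => rw [hz]
  simp [mul_comm]

lemma sum_sq_vecMul_mul [Fintype ρ] [DecidableEq ι] (A : Matrix ρ ι ℝ) (v : ι → ℝ) (b : ρ → ℝ) :
    ∑ k, (b ᵥ* A) k ^ 2 * v k = b ⬝ᵥ (A * Matrix.diagonal v * Aᵀ) *ᵥ b := by
  rw [← Matrix.mulVec_mulVec, ← Matrix.mulVec_mulVec, Matrix.dotProduct_mulVec,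
    Matrix.mulVec_transpose]
  exact sum_congr rfl fun k _ => by rw [Matrix.mulVec_diagonal]; ring

lemma charFunDual_gaussianRows_map_combineRows [Fintype ρ] [DecidableEq ρ] [DecidableEq κ]
    [DecidableEq ι] (A : Matrix ρ ι ℝ) (v : ι → ℝ≥0) (L : StrongDual ℝ (ρ → κ → ℝ)) :
    charFunDual ((gaussianRows κ v).map (combineRows A)) L =
      charFun (gaussianReal 0 (∑ i, (fun l => L (Pi.single l (Pi.single i 1))) ⬝ᵥ
        (A * Matrix.diagonal (fun k => (v k : ℝ)) * Aᵀ) *ᵥ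
          fun l => L (Pi.single l (Pi.single i 1))).toNNReal) 1 := by
  set b : κ → ρ → ℝ := fun i l => L (Pi.single l (Pi.single i 1))
  have hL : L ∘ combineRows A = fun u => ∑ k, ∑ i, (b i ᵥ* A) k * u k i := by
    ext u
    rw [Function.comp_apply, dual_apply_eq_sum L]
    simp only [combineRows, Matrix.vecMul, dotProduct, sum_mul, mul_sum, ← mul_assoc]
    rw [sum_comm, sum_comm (γ := ι)]
    exact sum_congr rfl fun _ _ => sum_comm
  rw [charFunDual_eq_charFun_map_one, Measure.map_map (by fun_prop)
    (continuous_combineRows A).measurable, hL, gaussianRows_map_sum_mul]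
  congr 2
  rw [sum_comm]
  change _ = (∑ i, b i ⬝ᵥ _ *ᵥ b i).toNNReal
  simp only [← sum_sq_vecMul_mul]
  rw [← NNReal.coe_inj, Real.coe_toNNReal _ (by positivity)]
  simp [sq_nonneg]

theorem gaussianRows_map_combineRows_eq [Finite ρ] [DecidableEq ι] [DecidableEq τ]
    {A : Matrix ρ ι ℝ} {B : Matrix ρ τ ℝ} {v : ι → ℝ≥0} {v' : τ → ℝ≥0}
    (h : A * Matrix.diagonal (fun k => (v k : ℝ)) * Aᵀ =
      B * Matrix.diagonal (fun k => (v' k : ℝ)) * Bᵀ) :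
    (gaussianRows κ v).map (combineRows A) = (gaussianRows κ v').map (combineRows B) := by
  classical
  have := Fintype.ofFinite ρ
  refine Measure.ext_of_charFunDual (funext fun L => ?_)
  simp only [charFunDual_gaussianRows_map_combineRows, h]

end GaussianRows

section Density

variable {ι κ : Type*} [Fintype ι] [Fintype κ]

lemma pi_withDensity_ofReal {E : ι → Type*} [∀ i, MeasurableSpace (E i)]
    {ν : ∀ i, Measure (E i)} [∀ i, SigmaFinite (ν i)] {g : ∀ i, E i → ℝ}
    (hg : ∀ i x, 0 ≤ g i x) (hgi : ∀ i, Integrable (g i) (ν i)) :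
    Measure.pi (fun i => (ν i).withDensity fun x => ENNReal.ofReal (g i x)) =
      (Measure.pi ν).withDensity fun x => ENNReal.ofReal (∏ i, g i (x i)) := by
  have := fun i => isFiniteMeasure_withDensity_ofReal (hgi i).2
  refine Measure.pi_eq fun t ht => ?_
  rw [withDensity_apply _ (MeasurableSet.univ_pi ht), Measure.restrict_pi_pi,
    ← ofReal_integral_eq_lintegral_ofReal
      (Integrable.fintype_prod_dep fun i => (hgi i).integrableOn)
      (ae_of_all _ fun x => prod_nonneg fun i _ => hg i _),
    integral_fintype_prod_eq_prod, ENNReal.ofReal_prod_of_nonneg fun i _ => integral_nonneg (hg i)]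
  refine prod_congr rfl fun i _ => ?_
  rw [withDensity_apply _ (ht i), ofReal_integral_eq_lintegral_ofReal (hgi i).integrableOn
    (ae_of_all _ (hg i))]

lemma integral_withDensity_ofReal {E : Type*} [MeasurableSpace E] {ν : Measure E} {g : E → ℝ}
    (hg : ∀ x, 0 ≤ g x) (hgm : Measurable g) (h : E → ℝ) :
    ∫ x, h x ∂ν.withDensity (fun x => ENNReal.ofReal (g x)) = ∫ x, g x * h x ∂ν := by
  rw [integral_withDensity_eq_integral_toReal_smul (by fun_prop) (ae_of_all _ (by simp))]
  simp [ENNReal.toReal_ofReal, hg]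

/-- The density of `isoGaussian κ v` for `v ≠ 0`. -/
def isoGaussianPDF (v : ℝ≥0) (x : κ → ℝ) : ℝ :=
  (2 * π * v) ^ (-(Fintype.card κ : ℝ) / 2) * exp (-(∑ i, x i ^ 2) / (2 * v))

lemma isoGaussianPDF_zero_right (v : ℝ≥0) :
    isoGaussianPDF v (0 : κ → ℝ) = (2 * π * v) ^ (-(Fintype.card κ : ℝ) / 2) := by
  simp [isoGaussianPDF]

lemma isoGaussianPDF_eq_mul_exp (v : ℝ≥0) (x : κ → ℝ) :
    isoGaussianPDF v x = isoGaussianPDF v (0 : κ → ℝ) * exp (-(∑ i, x i ^ 2) / (2 * v)) := by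
  rw [isoGaussianPDF_zero_right, isoGaussianPDF]

lemma isoGaussianPDF_pos {v : ℝ≥0} (hv : v ≠ 0) (x : κ → ℝ) : 0 < isoGaussianPDF v x := by
  have : 0 < v := pos_of_ne_zero hv
  unfold isoGaussianPDF; positivity

lemma isoGaussianPDF_nonneg (v : ℝ≥0) (x : κ → ℝ) : 0 ≤ isoGaussianPDF v x := by
  unfold isoGaussianPDF; positivity

lemma isoGaussianPDF_le_zero_right (v : ℝ≥0) (x : κ → ℝ) :
    isoGaussianPDF v x ≤ isoGaussianPDF v (0 : κ → ℝ) := by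
  rw [isoGaussianPDF_eq_mul_exp]
  refine mul_le_of_le_one_right (isoGaussianPDF_nonneg v _) (exp_le_one_iff.2 ?_)
  rw [neg_div, neg_nonpos]
  positivity

lemma continuous_isoGaussianPDF (v : ℝ≥0) :
    Continuous (isoGaussianPDF v : (κ → ℝ) → ℝ) := by
  unfold isoGaussianPDF; fun_prop

lemma prod_gaussianPDFReal (v : ℝ≥0) (x : κ → ℝ) :
    ∏ i, gaussianPDFReal 0 v (x i) = isoGaussianPDF v x := by
  simp only [gaussianPDFReal, isoGaussianPDF, prod_mul_distrib, prod_const, card_univ, sub_zero,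
    ← exp_sum, ← sum_div, sum_neg_distrib]
  congr 1
  rw [sqrt_eq_rpow, ← rpow_neg (by positivity), ← rpow_natCast, ← rpow_mul (by positivity)]
  congr 1
  ring

lemma isoGaussian_eq_withDensity {v : ℝ≥0} (hv : v ≠ 0) :
    isoGaussian κ v = volume.withDensity fun x => ENNReal.ofReal (isoGaussianPDF v x) := by
  simp only [isoGaussian, gaussianReal_of_var_ne_zero _ hv, gaussianPDF_def,
    ← prod_gaussianPDFReal]
  exact pi_withDensity_ofReal (fun _ => gaussianPDFReal_nonneg 0 v)
    fun _ => integrable_gaussianPDFReal 0 v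

lemma integral_isoGaussian_eq {v : ℝ≥0} (hv : v ≠ 0) (g : (κ → ℝ) → ℝ) :
    ∫ x, g x ∂isoGaussian κ v = ∫ x, isoGaussianPDF v x * g x := by
  rw [isoGaussian_eq_withDensity hv, integral_withDensity_ofReal (isoGaussianPDF_nonneg v)
    (continuous_isoGaussianPDF v).measurable]

lemma integrable_isoGaussian_iff {v : ℝ≥0} (hv : v ≠ 0) {g : (κ → ℝ) → ℝ} :
    Integrable g (isoGaussian κ v) ↔ Integrable fun x => isoGaussianPDF v x * g x := by
  have hmeas := (continuous_isoGaussianPDF (κ := κ) v).measurable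
  rw [isoGaussian_eq_withDensity hv, integrable_withDensity_iff_integrable_smul' (by fun_prop)
    (ae_of_all _ (by simp))]
  simp [ENNReal.toReal_ofReal, isoGaussianPDF_nonneg]

lemma integrable_isoGaussianPDF {v : ℝ≥0} (hv : v ≠ 0) :
    Integrable (isoGaussianPDF v : (κ → ℝ) → ℝ) := by
  simpa using (integrable_isoGaussian_iff (κ := κ) hv).1 (integrable_const 1)

lemma integral_gaussianRows_eq {v : ι → ℝ≥0} (hv : ∀ k, v k ≠ 0) (g : (ι → κ → ℝ) → ℝ) :
    ∫ w, g w ∂gaussianRows κ v = ∫ w, (∏ k, isoGaussianPDF (v k) (w k)) * g w := by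
  have hmeas := fun k => (continuous_isoGaussianPDF (κ := κ) (v k)).measurable
  simp only [gaussianRows, isoGaussian_eq_withDensity (hv _)]
  rw [pi_withDensity_ofReal (fun k => isoGaussianPDF_nonneg (v k))
      fun k => integrable_isoGaussianPDF (hv k),
    integral_withDensity_ofReal (fun w => prod_nonneg fun k _ => isoGaussianPDF_nonneg _ _)
      (by fun_prop)]
  rfl

end Density

section Mixture

variable {ι κ : Type*} [Fintype ι]

section Displacements

variable [DecidableEq ι]

/-- Combines the rows of an array consisting of a noise row `none` and center rows `some j` into
the displacements `noise + center L - center l` of an observation of component `L` from the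
centers. -/
def displacementMatrix (L : ι) : Matrix ι (Option ι) ℝ :=
  fun l o => o.elim 1 fun j => (if j = L then 1 else 0) - if j = l then 1 else 0

lemma combineRows_displacementMatrix (L : ι) (z : Option ι → κ → ℝ) (l : ι) :
    combineRows (displacementMatrix L) z l = z (some L) + z none - z (some l) := by
  ext i
  simp only [combineRows, displacementMatrix, Fintype.sum_option, Option.elim_none,
    Option.elim_some, sub_mul, sum_sub_distrib, ite_mul, one_mul, zero_mul, sum_ite_eq', mem_univ,
    if_true, Pi.add_apply, Pi.sub_apply]
  ring

/-- The covariance, across the components `l`, of the displacements of an observation of component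
`L` from the centers, when the centers have variance `1` and the noise has variance `μ⁻¹`. -/
def displacementCov (μ : ℝ) (L : ι) : Matrix ι ι ℝ :=
  fun l l' => 1 + μ⁻¹ - (if l = L then 1 else 0) - (if l' = L then 1 else 0) +
    if l = l' then 1 else 0

lemma displacementCov_mulVec (μ : ℝ) (L : ι) (b : ι → ℝ) (l : ι) :
    (displacementCov μ L *ᵥ b) l =
      (1 + μ⁻¹ - if l = L then 1 else 0) * ∑ l', b l' - b L + b l := by
  simp only [Matrix.mulVec, dotProduct, displacementCov, add_mul, sub_mul, sum_add_distrib,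
    sum_sub_distrib, ite_mul, one_mul, zero_mul, sum_ite_eq, sum_ite_eq', mem_univ, if_true,
    ← mul_sum]
  split_ifs <;> simp

lemma displacementMatrix_mul_diagonal_mul_transpose {v r : ℝ≥0} {μ : ℝ} (hv : (v : ℝ) = r * μ⁻¹)
    (L : ι) :
    displacementMatrix L * Matrix.diagonal (fun o : Option ι => ((o.elim v fun _ => r : ℝ≥0) : ℝ)) *
        (displacementMatrix L)ᵀ =
      (r : ℝ) • displacementCov μ L := by
  ext l l'
  rw [Matrix.mul_apply]
  simp only [Matrix.mul_diagonal, Matrix.transpose_apply, Fintype.sum_option,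
    displacementMatrix, displacementCov, Option.elim_none, Option.elim_some, Matrix.smul_apply,
    smul_eq_mul, hv, mul_sub, sub_mul, sum_sub_distrib, ite_mul, mul_ite, one_mul, mul_one,
    zero_mul, mul_zero, sum_ite_eq', mem_univ, if_true, @eq_comm _ L, @eq_comm _ l' l]
  split_ifs <;> ring

end Displacements

variable [Fintype κ]

/-- The average over `l` of the Gaussian density at `z l`. The density at `x` of the equal-weight
Gaussian mixture with centers `w` is the case `z l = x - w l`. -/
def meanGaussianPDF (v : ℝ≥0) (z : ι → κ → ℝ) : ℝ :=
  (1 / (Fintype.card ι : ℝ)) * ∑ l, isoGaussianPDF v (z l)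

lemma continuous_meanGaussianPDF (v : ℝ≥0) :
    Continuous (meanGaussianPDF v : (ι → κ → ℝ) → ℝ) := by
  have := continuous_isoGaussianPDF (κ := κ) v
  unfold meanGaussianPDF; fun_prop

lemma meanGaussianPDF_comp_perm (v : ℝ≥0) (z : ι → κ → ℝ) (e : Equiv.Perm ι) :
    meanGaussianPDF v (fun l => z (e l)) = meanGaussianPDF v z := by
  rw [meanGaussianPDF, Equiv.sum_comp e fun l => isoGaussianPDF v (z l), meanGaussianPDF]

section Nonempty

variable [Nonempty ι] {v : ℝ≥0}

lemma meanGaussianPDF_pos (hv : v ≠ 0) (z : ι → κ → ℝ) : 0 < meanGaussianPDF v z :=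
  mul_pos (by positivity) (sum_pos (fun _ _ => isoGaussianPDF_pos hv _) univ_nonempty)

lemma meanGaussianPDF_le (v : ℝ≥0) (z : ι → κ → ℝ) :
    meanGaussianPDF v z ≤ isoGaussianPDF v (0 : κ → ℝ) := by
  have h := sum_le_card_nsmul univ (fun l => isoGaussianPDF v (z l)) _
    fun l _ => isoGaussianPDF_le_zero_right v _
  rw [nsmul_eq_mul, card_univ] at h
  rw [meanGaussianPDF, one_div]
  exact inv_mul_le_of_le_mul₀ (by positivity) (isoGaussianPDF_nonneg v _) h

lemma isoGaussianPDF_le_card_mul_meanGaussianPDF (v : ℝ≥0) (z : ι → κ → ℝ) (j : ι) :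
    isoGaussianPDF v (z j) ≤ Fintype.card ι * meanGaussianPDF v z := by
  rw [meanGaussianPDF, ← mul_assoc, mul_one_div_cancel (by positivity), one_mul]
  exact single_le_sum (fun l _ => isoGaussianPDF_nonneg v (z l)) (mem_univ j)

lemma abs_log_meanGaussianPDF_le (hv : v ≠ 0) (z : ι → κ → ℝ) (j : ι) :
    |log (meanGaussianPDF v z)| ≤
      |log (isoGaussianPDF v (0 : κ → ℝ))| + log (Fintype.card ι) + (∑ i, z j i ^ 2) / (2 * v) := by
  have hpdf := isoGaussianPDF_pos hv (0 : κ → ℝ)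
  have hpos := meanGaussianPDF_pos hv z
  have hcard : 0 ≤ log (Fintype.card ι) := log_natCast_nonneg _
  have hsq : 0 ≤ (∑ i, z j i ^ 2) / (2 * (v : ℝ)) := by positivity
  have hupper := log_le_log hpos (meanGaussianPDF_le v z)
  have hlower := log_le_log (isoGaussianPDF_pos hv _)
    (isoGaussianPDF_le_card_mul_meanGaussianPDF v z j)
  rw [isoGaussianPDF_eq_mul_exp, log_mul hpdf.ne' (exp_pos _).ne', log_exp,
    log_mul (by positivity) hpos.ne', neg_div] at hlower
  rw [abs_le]
  constructor <;>
    linarith [neg_abs_le (log (isoGaussianPDF v (0 : κ → ℝ))),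
      le_abs_self (log (isoGaussianPDF v (0 : κ → ℝ)))]

lemma log_meanGaussianPDF_eq (hv : v ≠ 0) {z : ι → κ → ℝ} {c : ℝ} {d : ι → ℝ}
    (hz : ∀ l, -(∑ i, z l i ^ 2) / (2 * v) = c + d l) :
    log (meanGaussianPDF v z) = log (isoGaussianPDF v (0 : κ → ℝ)) + c +
      log ((1 / (Fintype.card ι : ℝ)) * ∑ l, exp (d l)) := by
  have hpdf := isoGaussianPDF_pos hv (0 : κ → ℝ)
  have hfactor : meanGaussianPDF v z = isoGaussianPDF v (0 : κ → ℝ) * exp c *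
      ((1 / (Fintype.card ι : ℝ)) * ∑ l, exp (d l)) := by
    rw [mul_left_comm, mul_sum, meanGaussianPDF]
    simp only [isoGaussianPDF_eq_mul_exp v (z _), hz, exp_add, mul_assoc]
  rw [hfactor, log_mul (by positivity) (by positivity), log_mul hpdf.ne' (exp_pos c).ne', log_exp]

lemma continuous_log_meanGaussianPDF (hv : v ≠ 0) :
    Continuous fun z : ι → κ → ℝ => log (meanGaussianPDF v z) :=
  (continuous_meanGaussianPDF v).log fun z => (meanGaussianPDF_pos hv z).ne'

lemma integrable_log_meanGaussianPDF {Ω : Type*} [MeasurableSpace Ω] {ν : Measure Ω}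
    [IsFiniteMeasure ν] (hv : v ≠ 0) {z : Ω → ι → κ → ℝ} (hz : Measurable z) (j : ι)
    (hj : Integrable (fun ω => ∑ i, z ω j i ^ 2) ν) :
    Integrable (fun ω => log (meanGaussianPDF v (z ω))) ν :=
  ((integrable_const _).add (hj.div_const _)).mono'
    ((continuous_log_meanGaussianPDF hv).measurable.comp hz).aestronglyMeasurable
    (ae_of_all _ fun ω => abs_log_meanGaussianPDF_le hv (z ω) j)

end Nonempty

lemma integrable_sum_sq_isoGaussian (v : ℝ≥0) :
    Integrable (fun y => ∑ i, y i ^ 2) (isoGaussian κ v) :=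
  integrable_finsetSum _ fun i _ => (measurePreserving_eval (fun _ : κ => gaussianReal 0 v)
    i).integrable_comp_of_integrable (integrable_sq_gaussianReal v)

section Entropy

lemma integral_pi_comp_perm {E : Type*} [MeasurableSpace E] (ν : Measure E) [SigmaFinite ν]
    (e : Equiv.Perm ι) (g : (ι → E) → ℝ) :
    ∫ w, g (fun k => w (e k)) ∂Measure.pi (fun _ => ν) = ∫ w, g w ∂Measure.pi fun _ => ν := by
  refine Eq.trans ?_ ((measurePreserving_piCongrLeft (fun _ => ν) e.symm).integral_comp' g)
  congr! 3 with w
  ext k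
  simpa using (MeasurableEquiv.piCongrLeft_apply_apply (β := fun _ => E) e.symm w (e k)).symm

lemma integral_log_mixture_add_eq (v r : ℝ≥0) (j L : ι) :
    ∫ w, ∫ y, log (meanGaussianPDF v fun l => w j + y - w l) ∂isoGaussian κ v
        ∂gaussianRows κ (fun _ => r) =
      ∫ w, ∫ y, log (meanGaussianPDF v fun l => w L + y - w l) ∂isoGaussian κ v
        ∂gaussianRows κ (fun _ => r) := by
  classical
  have h := integral_pi_comp_perm (isoGaussian κ r) (Equiv.swap j L)
    fun w => ∫ y, log (meanGaussianPDF v fun l => w j + y - w l) ∂isoGaussian κ v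
  refine h.symm.trans ?_
  simp only [Equiv.swap_apply_left, gaussianRows]
  congr! 5 with w y
  exact meanGaussianPDF_comp_perm v (fun l => w L + y - w l) (Equiv.swap j L)

variable [Nonempty ι] {v : ℝ≥0}

lemma integrable_log_mixture_add (hv : v ≠ 0) (w : ι → κ → ℝ) (j : ι) :
    Integrable (fun y => log (meanGaussianPDF v fun l => w j + y - w l)) (isoGaussian κ v) :=
  integrable_log_meanGaussianPDF hv (by fun_prop) j
    (by simpa using integrable_sum_sq_isoGaussian v)

lemma integrable_log_mixture_add_prod (hv : v ≠ 0) (r : ℝ≥0) (j : ι) :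
    Integrable
      (fun p : (ι → κ → ℝ) × (κ → ℝ) => log (meanGaussianPDF v fun l => p.1 j + p.2 - p.1 l))
      ((gaussianRows κ fun _ => r).prod (isoGaussian κ v)) :=
  integrable_log_meanGaussianPDF hv (by fun_prop) j
    (by simpa using (integrable_sum_sq_isoGaussian v).comp_snd (gaussianRows κ fun _ : ι => r))

lemma integral_mixture_mul_log (hv : v ≠ 0) (w : ι → κ → ℝ) :
    ∫ x, (meanGaussianPDF v fun l => x - w l) * log (meanGaussianPDF v fun l => x - w l) =
      (1 / (Fintype.card ι : ℝ)) *
        ∑ j, ∫ y, log (meanGaussianPDF v fun l => w j + y - w l) ∂isoGaussian κ v := by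
  set g : (κ → ℝ) → ℝ := fun x => log (meanGaussianPDF v fun l => x - w l)
  have htranslate (j : ι) : (fun x => isoGaussianPDF v (x - w j) * g x) =
      fun x => (fun y => isoGaussianPDF v y * g (w j + y)) (x - w j) := by
    simp
  have hint (j : ι) : Integrable fun x => isoGaussianPDF v (x - w j) * g x := by
    rw [htranslate]
    exact ((integrable_isoGaussian_iff hv).1 (integrable_log_mixture_add hv w j)).comp_sub_right _
  calc ∫ x, (meanGaussianPDF v fun l => x - w l) * g x
      = ∫ x, (1 / (Fintype.card ι : ℝ)) * ∑ j, isoGaussianPDF v (x - w j) * g x := by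
        simp only [meanGaussianPDF, mul_assoc, sum_mul]
    _ = (1 / (Fintype.card ι : ℝ)) * ∑ j, ∫ x, isoGaussianPDF v (x - w j) * g x := by
        rw [integral_const_mul, integral_finsetSum _ fun j _ => hint j]
    _ = _ := by
        simp only [htranslate, integral_isoGaussian_eq hv]
        exact congrArg _ (sum_congr rfl fun j _ => integral_sub_right_eq_self
          (fun y => isoGaussianPDF v y * g (w j + y)) (w j))

/-- By exchangeability of the centers, an observation may be assumed to come from the component
`L`. -/
theorem integral_integral_mixture_mul_log (hv : v ≠ 0) (r : ℝ≥0) (L : ι) :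
    ∫ w, (∫ x, (meanGaussianPDF v fun l => x - w l) * log (meanGaussianPDF v fun l => x - w l))
        ∂gaussianRows κ (fun _ : ι => r) =
      ∫ p, log (meanGaussianPDF v fun l => p.1 L + p.2 - p.1 l)
        ∂(gaussianRows κ fun _ : ι => r).prod (isoGaussian κ v) := by
  simp only [integral_mixture_mul_log hv]
  rw [integral_const_mul, integral_finsetSum _ fun j _ =>
      (integrable_log_mixture_add_prod hv r j).integral_prod_left,
    sum_congr rfl fun j _ => integral_log_mixture_add_eq v r j L,
    integral_prod _ (integrable_log_mixture_add_prod hv r L)]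
  simp

end Entropy

lemma gaussianRows_map_displacementMatrix [DecidableEq ι] (v r : ℝ≥0) (L : ι) :
    (gaussianRows κ fun o : Option ι => o.elim v fun _ => r).map
        (combineRows (displacementMatrix L)) =
      ((gaussianRows κ fun _ : ι => r).prod (isoGaussian κ v)).map
        fun p l => p.1 L + p.2 - p.1 l := by
  rw [gaussianRows, ← Measure.pi_map_piOptionEquivProd,
    Measure.map_map (continuous_combineRows _).measurable (by fun_prop)]
  exact congrArg₂ Measure.map (funext fun p => funext fun l => combineRows_displacementMatrix L _ l)
    rfl

end Mixture

section Scalars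

variable {q : ℕ} {μ : ℝ}

lemma mJ_one_add_mJ_two (q : ℕ) (μ : ℝ) : mJ q μ 1 + mJ q μ 2 = 1 + μ := by
  unfold mJ lamJ; ring

lemma sq_sqrt_discriminant (q : ℕ) (hμ : 0 ≤ μ) :
    √(μ ^ 2 - (4 / (q : ℝ) - 2) * μ + 1) ^ 2 = μ ^ 2 - (4 / (q : ℝ) - 2) * μ + 1 := by
  have hfour : 4 / (q : ℝ) ≤ 4 := by
    rcases q.eq_zero_or_pos with rfl | hq
    · simp
    · exact div_le_self (by norm_num) (by exact_mod_cast hq)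
  exact sq_sqrt (by nlinarith [sq_nonneg (μ - 1)])

lemma mJ_one_mul_mJ_two (q : ℕ) (hμ : 0 ≤ μ) : mJ q μ 1 * mJ q μ 2 = μ / q := by
  unfold mJ lamJ
  linear_combination -1 / 4 * sq_sqrt_discriminant q hμ

lemma mJ_quadratic_eq_zero (hq : q ≠ 0) (hμ : 0 ≤ μ) (j : ℕ) :
    q * mJ q μ j ^ 2 - q * (1 + μ) * mJ q μ j + μ = 0 := by
  have hsign : ((-1 : ℝ) ^ (j + 1)) ^ 2 = 1 := by rw [← pow_mul, mul_comm, pow_mul]; simp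
  have hcancel : (q : ℝ) * (4 / q) = 4 := mul_div_cancel₀ _ (by exact_mod_cast hq)
  unfold mJ lamJ
  linear_combination (q / 4 : ℝ) * ((-1) ^ (j + 1)) ^ 2 * sq_sqrt_discriminant q hμ +
    (q / 4 : ℝ) * (μ ^ 2 - (4 / (q : ℝ) - 2) * μ + 1) * hsign - μ / 4 * hcancel

lemma mJ_pos (hq : q ≠ 0) (hμ : 0 < μ) (j : ℕ) : 0 < mJ q μ j := by
  have hsq : (0 : ℝ) ≤ q * mJ q μ j ^ 2 := by positivity
  have hroot : 0 < q * (1 + μ) * mJ q μ j := by linarith [mJ_quadratic_eq_zero hq hμ.le j]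
  exact pos_of_mul_pos_right hroot (by positivity)

lemma inv_mJ (hq : q ≠ 0) (hμ : 0 < μ) (j : ℕ) :
    (mJ q μ j)⁻¹ = (1 + μ⁻¹) * (q - 1) + 1 + xJ q μ j * μ⁻¹ := by
  have := mJ_pos hq hμ j
  unfold xJ
  field_simp
  linear_combination mJ_quadratic_eq_zero hq hμ.le j

lemma inv_mJ_mul_xJ (hq : q ≠ 0) (hμ : 0 < μ) (j : ℕ) :
    (mJ q μ j)⁻¹ * xJ q μ j = μ⁻¹ * (q - 1 + xJ q μ j) := by
  have := mJ_pos hq hμ j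
  unfold xJ
  field_simp
  linear_combination mJ_quadratic_eq_zero hq hμ.le j

lemma xJ_one_mul_xJ_two (hq : q ≠ 0) (hμ : 0 ≤ μ) : xJ q μ 1 * xJ q μ 2 = 1 - q := by
  have hprod : mJ q μ 1 * mJ q μ 2 * q = μ := by
    rw [mJ_one_mul_mJ_two q hμ, div_mul_cancel₀ _ (by exact_mod_cast hq)]
  unfold xJ
  linear_combination -(q : ℝ) * mJ_one_add_mJ_two q μ + q * hprod

/-- The inverse of the norm of the vector `(1, …, 1, x_j) ∈ ℝ^q`. -/
def invNorm (q : ℕ) (μ : ℝ) (j : ℕ) : ℝ := (√((q : ℝ) - 1 + xJ q μ j ^ 2))⁻¹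

lemma sq_invNorm (hq : q ≠ 0) (μ : ℝ) (j : ℕ) :
    invNorm q μ j ^ 2 = ((q : ℝ) - 1 + xJ q μ j ^ 2)⁻¹ := by
  have : (1 : ℝ) ≤ q := by exact_mod_cast Nat.one_le_iff_ne_zero.2 hq
  rw [invNorm, inv_pow, sq_sqrt (by nlinarith [sq_nonneg (xJ q μ j)])]

lemma inv_add_sq_add_inv_add_sq {a x y : ℝ} (ha : 0 < a) (h : x * y = -a) :
    (a + x ^ 2)⁻¹ + (a + y ^ 2)⁻¹ = a⁻¹ := by
  field_simp
  linear_combination -(x * y - a) * h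

lemma inv_add_sq_mul_add_inv_add_sq_mul {a x y : ℝ} (ha : 0 < a) (h : x * y = -a) :
    (a + x ^ 2)⁻¹ * x + (a + y ^ 2)⁻¹ * y = 0 := by
  field_simp
  linear_combination (x + y) * h

lemma sq_invNorm_div_mJ_add (hq : 1 < q) (hμ : 0 < μ) :
    invNorm q μ 1 ^ 2 / mJ q μ 1 + invNorm q μ 2 ^ 2 / mJ q μ 2 = 1 / μ + q / (q - 1) := by
  have hq0 : q ≠ 0 := by omega
  have hQ : (0 : ℝ) < q - 1 := sub_pos.2 (by exact_mod_cast hq)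
  have hx : xJ q μ 1 * xJ q μ 2 = -(q - 1) := by rw [xJ_one_mul_xJ_two hq0 hμ.le]; ring
  simp only [div_eq_mul_inv, inv_mJ hq0 hμ, sq_invNorm hq0]
  have hsum := inv_add_sq_add_inv_add_sq hQ hx
  have hweighted := inv_add_sq_mul_add_inv_add_sq_mul hQ hx
  have hcancel : ((q : ℝ) - 1)⁻¹ * (q - 1) = 1 := inv_mul_cancel₀ hQ.ne'
  linear_combination ((1 + μ⁻¹) * (q - 1) + 1) * hsum + μ⁻¹ * hweighted + μ⁻¹ * hcancel

end Scalars

section Eigenvectors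

lemma sum_ite_val_lt_ite_val_eq {q i : ℕ} (hi : i < q) (a b : ℝ) :
    ∑ k : Fin q, (if (k : ℕ) < i then a else if (k : ℕ) = i then b else 0) = i * a + b := by
  have hsplit (k : Fin q) : (if (k : ℕ) < i then a else if (k : ℕ) = i then b else 0) =
      (if (k : ℕ) < i then a else 0) + if k = ⟨i, hi⟩ then b else 0 := by
    simp only [Fin.ext_iff]
    split_ifs <;> first | omega | simp
  simp [hsplit, sum_add_distrib, ← sum_filter, Fin.card_filter_val_lt, hi.le]

lemma sum_alphaVec {q i : ℕ} (hi : i < q) : ∑ l, alphaVec q i l = 0 := by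
  simp only [alphaVec, add_lt_add_iff_right, add_left_inj, ← mul_sum,
    sum_ite_val_lt_ite_val_eq hi]
  ring

lemma alphaVec_dotProduct_self {q i : ℕ} (hi : i ≠ 0) (hiq : i < q) :
    alphaVec q i ⬝ᵥ alphaVec q i = 1 := by
  have hpos : (0 : ℝ) < i * (i + 1) := by positivity
  simp only [dotProduct, alphaVec, add_lt_add_iff_right, add_left_inj, ← sq, mul_pow, ite_pow,
    one_pow, neg_sq, zero_pow two_ne_zero, ← mul_sum, sum_ite_val_lt_ite_val_eq hiq, inv_pow,
    sq_sqrt hpos.le]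
  rw [show (i : ℝ) * 1 + i ^ 2 = i * (i + 1) by ring, inv_mul_cancel₀ hpos.ne']

/-- On the support of `α_i` the vector `α_j` is constant. -/
lemma alphaVec_dotProduct_of_lt {q i j : ℕ} (hij : i < j) (hjq : j < q) :
    alphaVec q i ⬝ᵥ alphaVec q j = 0 := by
  have hconst (l : Fin q) :
      alphaVec q i l * alphaVec q j l = alphaVec q i l * (√((j : ℝ) * (j + 1)))⁻¹ := by
    unfold alphaVec
    split_ifs <;> first | omega | simp
  rw [dotProduct, sum_congr rfl fun l _ => hconst l, ← sum_mul, sum_alphaVec (hij.trans hjq),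
    zero_mul]

lemma alphaVec_dotProduct_of_ne {q i j : ℕ} (hij : i ≠ j) (hiq : i < q) (hjq : j < q) :
    alphaVec q i ⬝ᵥ alphaVec q j = 0 := by
  rcases hij.lt_or_gt with h | h
  · exact alphaVec_dotProduct_of_lt h hjq
  · rw [dotProduct_comm]; exact alphaVec_dotProduct_of_lt h hiq

lemma alphaVec_apply_eq_zero {q i : ℕ} {l : Fin q} (hl : i < l) : alphaVec q i l = 0 := by
  unfold alphaVec
  rw [if_neg (by omega), if_neg (by omega), mul_zero]

section Spike

variable {ι : Type*} [DecidableEq ι]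

/-- The vector with entry `x` at `L` and all other entries `1`. -/
def spikeVec (L : ι) (x : ℝ) : ι → ℝ := Function.update 1 L x

variable [Fintype ι]

lemma dotProduct_spikeVec (b : ι → ℝ) (L : ι) (x : ℝ) :
    b ⬝ᵥ spikeVec L x = ∑ l, b l + (x - 1) * b L := by
  have hsplit (l : ι) : b l * spikeVec L x l = b l + if l = L then (x - 1) * b l else 0 := by
    rw [spikeVec, Function.update_apply]
    split_ifs
    · ring
    · simp
  simp [dotProduct, hsplit, sum_add_distrib]

lemma sum_spikeVec (L : ι) (x : ℝ) : ∑ l, spikeVec L x l = Fintype.card ι - 1 + x := by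
  rw [← one_dotProduct, dotProduct_spikeVec]
  simp only [Pi.one_apply, sum_const, card_univ, nsmul_eq_mul, mul_one]
  ring

lemma spikeVec_dotProduct_spikeVec (L : ι) (x y : ℝ) :
    spikeVec L x ⬝ᵥ spikeVec L y = Fintype.card ι - 1 + x * y := by
  rw [dotProduct_spikeVec, sum_spikeVec, spikeVec, Function.update_self]
  ring

lemma displacementCov_mulVec_of_sum_eq_zero (μ : ℝ) {L : ι} {b : ι → ℝ} (hsum : ∑ l, b l = 0)
    (hL : b L = 0) : displacementCov μ L *ᵥ b = b := by
  ext l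
  rw [displacementCov_mulVec, hsum, hL]
  ring

end Spike

lemma displacementCov_mulVec_spikeVec {q : ℕ} {μ : ℝ} (hμ : 0 < μ) (L : Fin q) (j : ℕ) :
    displacementCov μ L *ᵥ spikeVec L (xJ q μ j) = (mJ q μ j)⁻¹ • spikeVec L (xJ q μ j) := by
  have hq : q ≠ 0 := L.pos.ne'
  ext l
  rw [displacementCov_mulVec, sum_spikeVec, Fintype.card_fin, Pi.smul_apply, smul_eq_mul]
  rcases eq_or_ne l L with rfl | hl
  · simp only [spikeVec, Function.update_self, if_true, inv_mJ_mul_xJ hq hμ]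
    ring
  · simp only [spikeVec, Function.update_self, Function.update_of_ne hl, if_neg hl, Pi.one_apply,
      inv_mJ hq hμ]
    ring

lemma of_snoc_mul_transpose_eq_one {n : ℕ} {ι : Type*} [Fintype ι] {A : Fin n → ι → ℝ}
    {b : ι → ℝ} (hA : Matrix.of A * (Matrix.of A)ᵀ = 1) (hb : b ⬝ᵥ b = 1)
    (hAb : ∀ k, A k ⬝ᵥ b = 0) :
    Matrix.of (Fin.snoc A b : Fin (n + 1) → ι → ℝ) * (Matrix.of (Fin.snoc A b))ᵀ = 1 := by
  ext k k'
  change (Fin.snoc A b : Fin (n + 1) → ι → ℝ) k ⬝ᵥ (Fin.snoc A b : Fin (n + 1) → ι → ℝ) k' = _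
  induction k using Fin.lastCases with
  | last =>
    induction k' using Fin.lastCases with
    | last => simp [hb]
    | cast k' => simp [dotProduct_comm b, hAb, (Fin.castSucc_lt_last k').ne']
  | cast k =>
    induction k' using Fin.lastCases with
    | last => simp [hAb, (Fin.castSucc_lt_last k).ne]
    | cast k' => simpa [Matrix.mul_apply, dotProduct, Matrix.one_apply] using congrFun₂ hA k k'

lemma eq_transpose_mul_diagonal_mul_of_mulVec_eq {ι : Type*} [Fintype ι] [DecidableEq ι]
    {C E : Matrix ι ι ℝ} {d : ι → ℝ} (hE : E * Eᵀ = 1) (hC : ∀ k, C *ᵥ E k = d k • E k) :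
    C = Eᵀ * Matrix.diagonal d * E := by
  have hCE : C * Eᵀ = Eᵀ * Matrix.diagonal d := by
    ext l k
    rw [Matrix.mul_diagonal, mul_comm]
    exact congrFun (hC k) l
  rw [← hCE, mul_assoc, mul_eq_one_comm.1 hE, mul_one]

variable {p : ℕ} {μ : ℝ}

/-- The eigenvectors `α_1, …, α_{q-2}` and the normalized `(1, …, 1, x_1)`, `(1, …, 1, x_2)` as
rows of a matrix, where `q = p + 2`. -/
def eigenMatrix (p : ℕ) (μ : ℝ) : Matrix (Fin (p + 2)) (Fin (p + 2)) ℝ :=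
  Matrix.of (Fin.snoc (Fin.snoc (fun i : Fin p => alphaVec (p + 2) (i + 1))
    (invNorm (p + 2) μ 1 • spikeVec (Fin.last _) (xJ (p + 2) μ 1)))
    (invNorm (p + 2) μ 2 • spikeVec (Fin.last _) (xJ (p + 2) μ 2)))

lemma eigenMatrix_castSucc_castSucc (μ : ℝ) (i : Fin p) :
    eigenMatrix p μ i.castSucc.castSucc = alphaVec (p + 2) (i + 1) := by
  ext l
  simp [eigenMatrix]

lemma eigenMatrix_castSucc_last (p : ℕ) (μ : ℝ) :
    eigenMatrix p μ (Fin.last p).castSucc =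
      invNorm (p + 2) μ 1 • spikeVec (Fin.last _) (xJ (p + 2) μ 1) := by
  ext l
  simp [eigenMatrix]

lemma eigenMatrix_last (p : ℕ) (μ : ℝ) :
    eigenMatrix p μ (Fin.last (p + 1)) =
      invNorm (p + 2) μ 2 • spikeVec (Fin.last _) (xJ (p + 2) μ 2) := by
  ext l
  simp [eigenMatrix]

lemma alphaVec_last (i : Fin p) : alphaVec (p + 2) (i + 1) (Fin.last (p + 1)) = 0 :=
  alphaVec_apply_eq_zero (by simp)

lemma alphaVec_dotProduct_smul_spikeVec (i : Fin p) (c x : ℝ) :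
    alphaVec (p + 2) (i + 1) ⬝ᵥ c • spikeVec (Fin.last _) x = 0 := by
  rw [dotProduct_smul, dotProduct_spikeVec, sum_alphaVec (by omega), alphaVec_last]
  simp

lemma invNorm_smul_spikeVec_dotProduct_self (j : ℕ) :
    invNorm (p + 2) μ j • spikeVec (Fin.last (p + 1)) (xJ (p + 2) μ j) ⬝ᵥ
      invNorm (p + 2) μ j • spikeVec (Fin.last _) (xJ (p + 2) μ j) = 1 := by
  have hpos : (0 : ℝ) < (p + 2 : ℕ) - 1 + xJ (p + 2) μ j ^ 2 := by
    push_cast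
    linarith [p.cast_nonneg (α := ℝ), sq_nonneg (xJ (p + 2) μ j)]
  rw [smul_dotProduct, dotProduct_smul, spikeVec_dotProduct_spikeVec, Fintype.card_fin, smul_smul,
    ← sq, ← sq, sq_invNorm (by omega), smul_eq_mul, inv_mul_cancel₀ hpos.ne']

lemma spikeVec_xJ_one_dotProduct_spikeVec_xJ_two (hμ : 0 ≤ μ) :
    spikeVec (Fin.last (p + 1)) (xJ (p + 2) μ 1) ⬝ᵥ
      spikeVec (Fin.last _) (xJ (p + 2) μ 2) = 0 := by
  rw [spikeVec_dotProduct_spikeVec, xJ_one_mul_xJ_two (by omega) hμ, Fintype.card_fin]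
  ring

lemma alphaVec_mul_transpose (p : ℕ) :
    (Matrix.of fun i : Fin p => alphaVec (p + 2) (i + 1)) *
      (Matrix.of fun i : Fin p => alphaVec (p + 2) (i + 1))ᵀ = 1 := by
  ext i i'
  change alphaVec (p + 2) (i + 1) ⬝ᵥ alphaVec (p + 2) (i' + 1) = _
  rcases eq_or_ne i i' with rfl | hne
  · rw [alphaVec_dotProduct_self (by omega) (by omega), Matrix.one_apply_eq]
  · rw [alphaVec_dotProduct_of_ne (by omega) (by omega) (by omega), Matrix.one_apply_ne hne]

lemma eigenMatrix_mul_transpose (hμ : 0 ≤ μ) : eigenMatrix p μ * (eigenMatrix p μ)ᵀ = 1 := by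
  refine of_snoc_mul_transpose_eq_one
    (of_snoc_mul_transpose_eq_one (alphaVec_mul_transpose p)
      (invNorm_smul_spikeVec_dotProduct_self 1) fun i => alphaVec_dotProduct_smul_spikeVec i _ _)
    (invNorm_smul_spikeVec_dotProduct_self 2) fun k => ?_
  induction k using Fin.lastCases with
  | last => simp [spikeVec_xJ_one_dotProduct_spikeVec_xJ_two hμ]
  | cast i => simpa using alphaVec_dotProduct_smul_spikeVec i _ _

lemma displacementCov_mulVec_eigenMatrix (hμ : 0 < μ) (k : Fin (p + 2)) :
    displacementCov μ (Fin.last (p + 1)) *ᵥ eigenMatrix p μ k =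
      (dCoef (p + 2) μ k)⁻¹ • eigenMatrix p μ k := by
  induction k using Fin.lastCases with
  | last =>
    rw [eigenMatrix_last, Matrix.mulVec_smul, displacementCov_mulVec_spikeVec hμ, smul_comm]
    simp [dCoef]
  | cast k =>
    induction k using Fin.lastCases with
    | last =>
      rw [eigenMatrix_castSucc_last, Matrix.mulVec_smul, displacementCov_mulVec_spikeVec hμ,
        smul_comm]
      simp [dCoef]
    | cast i =>
      simp [eigenMatrix_castSucc_castSucc, dCoef,
        displacementCov_mulVec_of_sum_eq_zero μ (sum_alphaVec (by omega)) (alphaVec_last i)]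

theorem displacementCov_eq_transpose_mul_diagonal_mul (hμ : 0 < μ) :
    displacementCov μ (Fin.last (p + 1)) =
      (eigenMatrix p μ)ᵀ * Matrix.diagonal (fun k => (dCoef (p + 2) μ k)⁻¹) * eigenMatrix p μ :=
  eq_transpose_mul_diagonal_mul_of_mulVec_eq (eigenMatrix_mul_transpose hμ.le)
    (displacementCov_mulVec_eigenMatrix hμ)

end Eigenvectors

section SpectralCoordinates

variable {p n : ℕ} {μ : ℝ}

lemma combineRows_transpose_eigenMatrix (μ : ℝ) (u : Fin (p + 2) → Fin n → ℝ) (l : Fin (p + 2)) :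
    combineRows (eigenMatrix p μ)ᵀ u l =
      ∑ m, omegaVec (p + 2) l m • u m +
        (invNorm (p + 2) μ 1 * spikeVec (Fin.last _) (xJ (p + 2) μ 1) l) •
          u (Fin.last p).castSucc +
        (invNorm (p + 2) μ 2 * spikeVec (Fin.last _) (xJ (p + 2) μ 2) l) • u (Fin.last _) := by
  ext i
  simp [combineRows, Fin.sum_univ_castSucc, omegaVec, eigenMatrix_castSucc_castSucc,
    eigenMatrix_castSucc_last, eigenMatrix_last]

lemma sum_omegaVec_last_smul (u : Fin (p + 2) → Fin n → ℝ) :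
    ∑ m, omegaVec (p + 2) (Fin.last _) m • u m = 0 := by
  simp [Fin.sum_univ_castSucc, omegaVec, alphaVec_last]

/-- The quantity `G_l` of the paper, where `q = p + 2`. -/
def termG (μ : ℝ) (u : Fin (p + 2) → Fin n → ℝ) (l : Fin (p + 2)) : ℝ :=
  ∑ m, ∑ m', omegaVec (p + 2) l m * omegaVec (p + 2) l m' * (u m ⬝ᵥ u m') +
    2 / √((p + 2 : ℕ) - 1 + xJ (p + 2) μ 1 ^ 2) *
      ∑ m, omegaVec (p + 2) l m * (u m ⬝ᵥ u (Fin.last p).castSucc) +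
    2 / √((p + 2 : ℕ) - 1 + xJ (p + 2) μ 2 ^ 2) *
      ∑ m, omegaVec (p + 2) l m * (u m ⬝ᵥ u (Fin.last _))

/-- The quantity `T` of the paper, where `q = p + 2`. -/
def termT (μ : ℝ) (u : Fin (p + 2) → Fin n → ℝ) : ℝ :=
  (xJ (p + 2) μ 2 ^ 2 - 1) / (2 * ((p + 2 : ℕ) - 1 + xJ (p + 2) μ 2 ^ 2)) *
      (u (Fin.last _) ⬝ᵥ u (Fin.last _)) +
    (xJ (p + 2) μ 1 ^ 2 - 1) / (2 * ((p + 2 : ℕ) - 1 + xJ (p + 2) μ 1 ^ 2)) *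
      (u (Fin.last p).castSucc ⬝ᵥ u (Fin.last p).castSucc) +
    (xJ (p + 2) μ 1 * xJ (p + 2) μ 2 - 1) /
        (√((p + 2 : ℕ) - 1 + xJ (p + 2) μ 1 ^ 2) * √((p + 2 : ℕ) - 1 + xJ (p + 2) μ 2 ^ 2)) *
      (u (Fin.last _) ⬝ᵥ u (Fin.last p).castSucc)

/-- The part of the squared norm of a displacement that does not depend on the component. -/
def commonForm (μ : ℝ) (u : Fin (p + 2) → Fin n → ℝ) : ℝ :=
  ∑ i, (invNorm (p + 2) μ 1 * u (Fin.last p).castSucc i +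
    invNorm (p + 2) μ 2 * u (Fin.last _) i) ^ 2

lemma termG_eq (μ : ℝ) (u : Fin (p + 2) → Fin n → ℝ) (l : Fin (p + 2)) :
    termG μ u l = ∑ i, ((∑ m, omegaVec (p + 2) l m • u m) i +
        (invNorm (p + 2) μ 1 * u (Fin.last p).castSucc i +
          invNorm (p + 2) μ 2 * u (Fin.last _) i)) ^ 2 - commonForm μ u := by
  set a := ∑ m, omegaVec (p + 2) l m • u m with ha
  have hsq : ∑ m, ∑ m', omegaVec (p + 2) l m * omegaVec (p + 2) l m' * (u m ⬝ᵥ u m') = a ⬝ᵥ a := by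
    simp [ha, dotProduct_sum, mul_assoc, dotProduct_comm, mul_left_comm]
  have hlin (k : Fin (p + 2)) : ∑ m, omegaVec (p + 2) l m * (u m ⬝ᵥ u k) = a ⬝ᵥ u k := by
    simp [ha, sum_dotProduct]
  rw [termG, hsq, hlin, hlin]
  simp only [commonForm, dotProduct, div_eq_mul_inv, mul_sum, ← sum_add_distrib,
    ← sum_sub_distrib]
  exact sum_congr rfl fun i _ => by simp only [invNorm]; ring

lemma two_mul_termT_eq (μ : ℝ) (u : Fin (p + 2) → Fin n → ℝ) :
    2 * termT μ u = ∑ i, (invNorm (p + 2) μ 1 * xJ (p + 2) μ 1 * u (Fin.last p).castSucc i +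
        invNorm (p + 2) μ 2 * xJ (p + 2) μ 2 * u (Fin.last _) i) ^ 2 - commonForm μ u := by
  have hsq (j : ℕ) : (xJ (p + 2) μ j ^ 2 - 1) / (2 * ((p + 2 : ℕ) - 1 + xJ (p + 2) μ j ^ 2)) =
      invNorm (p + 2) μ j ^ 2 * (xJ (p + 2) μ j ^ 2 - 1) / 2 := by
    rw [sq_invNorm (by omega), mul_comm 2, ← div_div]; ring
  simp only [termT, commonForm, hsq, dotProduct, div_eq_mul_inv, mul_inv, mul_sum,
    ← sum_add_distrib, ← sum_sub_distrib]
  exact sum_congr rfl fun i _ => by simp only [invNorm]; ring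

lemma sum_sq_combineRows_transpose_eigenMatrix (μ : ℝ) (u : Fin (p + 2) → Fin n → ℝ)
    (l : Fin (p + 2)) :
    ∑ i, combineRows (eigenMatrix p μ)ᵀ u l i ^ 2 = commonForm μ u +
      (termG μ u l + 2 * (if (l : ℕ) + 1 = p + 2 then 1 else 0) * termT μ u) := by
  rw [combineRows_transpose_eigenMatrix, termG_eq]
  induction l using Fin.lastCases with
  | last =>
    have hT := two_mul_termT_eq μ u
    simp only [sum_omegaVec_last_smul, spikeVec, Function.update_self, Fin.val_last, if_true,
      zero_add, Pi.zero_apply, Pi.add_apply, Pi.smul_apply, smul_eq_mul, mul_one]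
    rw [hT, commonForm]
    ring
  | cast l =>
    have hl : ¬(l.castSucc : ℕ) + 1 = p + 2 := by rw [Fin.val_castSucc]; omega
    simp only [spikeVec, Function.update_of_ne (Fin.castSucc_lt_last l).ne, if_neg hl,
      Pi.one_apply, Pi.add_apply, Pi.smul_apply, smul_eq_mul, mul_one, add_assoc]
    ring

lemma commonForm_eq_sum_sq (μ : ℝ) (u : Fin (p + 2) → Fin n → ℝ) :
    commonForm μ u = ∑ i, (∑ k, (Fin.snoc (Fin.snoc (fun _ : Fin p => 0) (invNorm (p + 2) μ 1))
      (invNorm (p + 2) μ 2) : Fin (p + 2) → ℝ) k * u k i) ^ 2 := by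
  simp [commonForm, Fin.sum_univ_castSucc]

lemma measU_eq_gaussianRows (q n : ℕ) (μ : ℝ) :
    measU q n μ = gaussianRows (Fin n) fun k => ((dCoef q μ k)⁻¹).toNNReal := rfl

instance isProbabilityMeasure_measU (q n : ℕ) (μ : ℝ) : IsProbabilityMeasure (measU q n μ) :=
  measU_eq_gaussianRows q n μ ▸ inferInstance

lemma integrable_commonForm (μ : ℝ) : Integrable (commonForm μ) (measU (p + 2) n μ) := by
  simp only [funext (commonForm_eq_sum_sq μ), measU_eq_gaussianRows]
  exact integrable_finsetSum _ fun i _ => integrable_sq_sum_mul_gaussianRows _ _ i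

lemma integral_commonForm (hμ : 0 < μ) :
    ∫ u, commonForm μ u ∂measU (p + 2) n μ =
      n * (1 / μ + (p + 2 : ℕ) / ((p + 2 : ℕ) - 1)) := by
  simp only [commonForm_eq_sum_sq, measU_eq_gaussianRows]
  rw [integral_finsetSum _ fun i _ => integrable_sq_sum_mul_gaussianRows _ _ i,
    sum_congr rfl fun i _ => integral_sq_sum_mul_gaussianRows _ _ i,
    ← sq_invNorm_div_mJ_add (by omega) hμ]
  have hpos (j : ℕ) : 0 < mJ (p + 2) μ j := mJ_pos (by omega) hμ j
  simp [Fin.sum_univ_castSucc, dCoef, (hpos _).le, div_eq_mul_inv, mul_add]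

lemma dCoef_pos (hμ : 0 < μ) (k : Fin (p + 2)) : 0 < dCoef (p + 2) μ k := by
  have hpos (j : ℕ) : 0 < mJ (p + 2) μ j := mJ_pos (by omega) hμ j
  unfold dCoef
  split_ifs
  exacts [one_pos, hpos 1, hpos 2]

section Average

variable {σ s : ℝ≥0}

lemma displacements_map_eq_measU_map (hμ0 : 0 < μ) (hμ : (σ ^ 2 : ℝ) = s ^ 2 * μ⁻¹) :
    ((gaussianRows (Fin n) fun _ : Fin (p + 2) => s ^ 2).prod (isoGaussian (Fin n) (σ ^ 2))).map
        (fun w l => w.1 (Fin.last _) + w.2 - w.1 l) =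
      (measU (p + 2) n μ).map (combineRows ((s : ℝ) • (eigenMatrix p μ)ᵀ)) := by
  rw [← gaussianRows_map_displacementMatrix, measU_eq_gaussianRows]
  refine gaussianRows_map_combineRows_eq ?_
  rw [displacementMatrix_mul_diagonal_mul_transpose (by exact_mod_cast hμ),
    displacementCov_eq_transpose_mul_diagonal_mul hμ0]
  simp only [coe_toNNReal _ (inv_nonneg.2 (dCoef_pos hμ0 _).le), Matrix.transpose_smul,
    Matrix.transpose_transpose, Matrix.smul_mul, Matrix.mul_smul, smul_smul]
  congr 1
  push_cast
  ring

lemma integral_integral_mixture_mul_log_eq_measU (hσ : σ ≠ 0) (hμ0 : 0 < μ)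
    (hμ : (σ ^ 2 : ℝ) = s ^ 2 * μ⁻¹) :
    ∫ w, (∫ x, (meanGaussianPDF (σ ^ 2) fun l => x - w l) *
        log (meanGaussianPDF (σ ^ 2) fun l => x - w l))
        ∂gaussianRows (Fin n) (fun _ : Fin (p + 2) => s ^ 2) =
      ∫ u, log (meanGaussianPDF (σ ^ 2) (combineRows ((s : ℝ) • (eigenMatrix p μ)ᵀ) u))
        ∂measU (p + 2) n μ := by
  have hlog {ν : Measure (Fin (p + 2) → Fin n → ℝ)} :
      AEStronglyMeasurable (fun z => log (meanGaussianPDF (σ ^ 2) z)) ν :=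
    (continuous_log_meanGaussianPDF (pow_ne_zero 2 hσ)).aestronglyMeasurable
  rw [integral_integral_mixture_mul_log (pow_ne_zero 2 hσ) _ (Fin.last _),
    ← integral_map (continuous_combineRows _).aemeasurable hlog,
    ← displacements_map_eq_measU_map hμ0 hμ, integral_map (by fun_prop) hlog]

lemma log_meanGaussianPDF_smul_eigenMatrix (hσ : σ ≠ 0) (hμ : μ = s ^ 2 / σ ^ 2)
    (u : Fin (p + 2) → Fin n → ℝ) :
    log (meanGaussianPDF (σ ^ 2) (combineRows ((s : ℝ) • (eigenMatrix p μ)ᵀ) u)) =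
      log (isoGaussianPDF (σ ^ 2) (0 : Fin n → ℝ)) - μ / 2 * commonForm μ u +
        log (1 / (p + 2 : ℕ) * ∑ l : Fin (p + 2), exp (-(μ / 2) *
          (termG μ u l + 2 * (if (l : ℕ) + 1 = p + 2 then 1 else 0) * termT μ u))) := by
  have hnorm (l : Fin (p + 2)) :
      ∑ i, combineRows ((s : ℝ) • (eigenMatrix p μ)ᵀ) u l i ^ 2 = s ^ 2 * (commonForm μ u +
        (termG μ u l + 2 * (if (l : ℕ) + 1 = p + 2 then 1 else 0) * termT μ u)) := by
    rw [← sum_sq_combineRows_transpose_eigenMatrix, mul_sum]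
    simp only [combineRows, Matrix.smul_apply, smul_eq_mul, mul_assoc, ← mul_sum, mul_pow]
  have hscale (c d : ℝ) : -(s ^ 2 * (c + d)) / (2 * (σ ^ 2 : ℝ≥0)) =
      -(μ / 2 * c) + -(μ / 2) * d := by
    rw [hμ, NNReal.coe_pow]
    field_simp
    ring
  rw [log_meanGaussianPDF_eq (pow_ne_zero 2 hσ) fun l => by rw [hnorm, hscale], Fintype.card_fin,
    sub_eq_add_neg]

lemma mul_log_mul_sqrt_eq (n : ℕ) (hσ : σ ≠ 0) :
    n * log (σ * √(2 * π * exp 1)) = n / 2 - log (isoGaussianPDF (σ ^ 2) (0 : Fin n → ℝ)) := by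
  have hlogσ : log (2 * π * σ ^ 2) = log (2 * π) + 2 * log σ := by
    rw [log_mul (by positivity) (by positivity), log_pow, Nat.cast_ofNat]
  have hlogexp : log (2 * π * exp 1) = log (2 * π) + 1 := by
    rw [log_mul (by positivity) (by positivity), log_exp]
  rw [isoGaussianPDF_zero_right, Fintype.card_fin, log_rpow (by positivity),
    log_mul (by positivity) (by positivity), log_sqrt (by positivity), NNReal.coe_pow, hlogσ,
    hlogexp]
  ring

lemma integrable_log_isoGaussianPDF_sub_commonForm (v : ℝ≥0) (μ : ℝ) :
    Integrable (fun u => log (isoGaussianPDF v (0 : Fin n → ℝ)) - μ / 2 * commonForm μ u)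
      (measU (p + 2) n μ) :=
  (integrable_const _).sub ((integrable_commonForm μ).const_mul _)

lemma integral_log_isoGaussianPDF_sub_commonForm (hσ : σ ≠ 0) (hμ : 0 < μ) :
    ∫ u, (log (isoGaussianPDF (σ ^ 2) (0 : Fin n → ℝ)) - μ / 2 * commonForm μ u)
        ∂measU (p + 2) n μ =
      -(n * log (σ * √(2 * π * exp 1)) + n / 2 * ((p + 2 : ℕ) / ((p + 2 : ℕ) - 1)) * μ) := by
  rw [integral_sub (integrable_const _) ((integrable_commonForm μ).const_mul _),
    integral_const_mul, integral_commonForm hμ, mul_log_mul_sqrt_eq n hσ, integral_const,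
    probReal_univ, one_smul]
  field_simp
  ring

end Average

end SpectralCoordinates

/-- Theorem 3 of the paper.
`h(X|W) = n·ln(σ√(2πe)) + (n/2)·(q/(q−1))·μ + S`, where
`S = −E_u[ ln( (1/q)·Σ_l exp(−(μ/2)(G_l + 2δ_{ql}T)) ) ]`. -/
theorem average_entropy_leading_terms_plus_S
    (q n : ℕ) (hq : 2 ≤ q) (hn : 1 ≤ n)
    (σ s : ℝ) (hσ : 0 < σ) (hs : 0 < s)
    (μ : ℝ) (hμ : μ = s ^ 2 / σ ^ 2)
    -- the Gaussian mixture density `f(x|w)`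
    (f : (Fin q → Fin n → ℝ) → (Fin n → ℝ) → ℝ)
    (hf : ∀ w x, f w x =
      (1 / (q : ℝ)) * ∑ j : Fin q, (2 * π * σ ^ 2) ^ (-(n : ℝ) / 2) *
        Real.exp (-(∑ i, (x i - w j i) ^ 2) / (2 * σ ^ 2)))
    -- the conditional differential entropy `h(X | W = w)`
    (hEnt : (Fin q → Fin n → ℝ) → ℝ)
    (hhEnt : ∀ w, hEnt w = -∫ x : Fin n → ℝ, f w x * Real.log (f w x))
    (hInt1 : ∀ w, Integrable (fun x : Fin n → ℝ => f w x * Real.log (f w x)))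
    -- the average differential entropy `h(X|W)`
    (H : ℝ)
    (hH : H = ∫ w : Fin q → Fin n → ℝ,
      (∏ j : Fin q, (2 * π * s ^ 2) ^ (-(n : ℝ) / 2) *
        Real.exp (-(∑ i, w j i ^ 2) / (2 * s ^ 2))) * hEnt w)
    (hInt2 : Integrable (fun w : Fin q → Fin n → ℝ =>
      (∏ j : Fin q, (2 * π * s ^ 2) ^ (-(n : ℝ) / 2) *
        Real.exp (-(∑ i, w j i ^ 2) / (2 * s ^ 2))) * hEnt w))
    -- the quantity `G_l`
    (G : (Fin q → Fin n → ℝ) → Fin q → ℝ)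
    (hG : ∀ u l, G u l =
      (∑ m : Fin q, ∑ m' : Fin q, omegaVec q l m * omegaVec q l m' *
        ∑ i, u m i * u m' i)
      + (2 / Real.sqrt ((q : ℝ) - 1 + xJ q μ 1 ^ 2)) *
          ∑ m : Fin q, omegaVec q l m * ∑ i, u m i * u ⟨q - 2, by omega⟩ i
      + (2 / Real.sqrt ((q : ℝ) - 1 + xJ q μ 2 ^ 2)) *
          ∑ m : Fin q, omegaVec q l m * ∑ i, u m i * u ⟨q - 1, by omega⟩ i)
    -- the quantity `T`
    (T : (Fin q → Fin n → ℝ) → ℝ)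
    (hT : ∀ u, T u =
      ((xJ q μ 2 ^ 2 - 1) / (2 * ((q : ℝ) - 1 + xJ q μ 2 ^ 2))) *
        (∑ i, u ⟨q - 1, by omega⟩ i * u ⟨q - 1, by omega⟩ i)
      + ((xJ q μ 1 ^ 2 - 1) / (2 * ((q : ℝ) - 1 + xJ q μ 1 ^ 2))) *
        (∑ i, u ⟨q - 2, by omega⟩ i * u ⟨q - 2, by omega⟩ i)
      + ((xJ q μ 1 * xJ q μ 2 - 1) /
          (Real.sqrt ((q : ℝ) - 1 + xJ q μ 1 ^ 2) * Real.sqrt ((q : ℝ) - 1 + xJ q μ 2 ^ 2))) *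
        (∑ i, u ⟨q - 1, by omega⟩ i * u ⟨q - 2, by omega⟩ i))
    -- the quantity `S`
    (S : ℝ)
    (hS : S = -∫ u : Fin q → Fin n → ℝ,
      Real.log ((1 / (q : ℝ)) * ∑ l : Fin q,
        Real.exp (-(μ / 2) * (G u l + 2 * (if (l : ℕ) + 1 = q then (1 : ℝ) else 0) * T u)))
      ∂(measU q n μ))
    (hInt3 : Integrable (fun u : Fin q → Fin n → ℝ =>
      Real.log ((1 / (q : ℝ)) * ∑ l : Fin q,
        Real.exp (-(μ / 2) * (G u l + 2 * (if (l : ℕ) + 1 = q then (1 : ℝ) else 0) * T u))))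
      (measU q n μ)) :
    H = (n : ℝ) * Real.log (σ * Real.sqrt (2 * π * Real.exp 1))
      + ((n : ℝ) / 2) * ((q : ℝ) / ((q : ℝ) - 1)) * μ + S := by
  obtain ⟨p, rfl⟩ := Nat.exists_eq_add_of_le' hq
  lift σ to ℝ≥0 using hσ.le
  lift s to ℝ≥0 using hs.le
  have hσ0 : σ ≠ 0 := by exact_mod_cast hσ.ne'
  have hμ0 : 0 < μ := hμ ▸ by positivity
  obtain rfl : G = termG μ := funext₂ hG
  obtain rfl : T = termT μ := funext hT
  have hmix (w x) : f w x = meanGaussianPDF (σ ^ 2) fun l => x - w l := by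
    simp [hf, meanGaussianPDF, isoGaussianPDF]
  have hs0 : s ^ 2 ≠ 0 := pow_ne_zero 2 (by exact_mod_cast hs.ne')
  have hspectral : H = -∫ u, log (meanGaussianPDF (σ ^ 2)
      (combineRows ((s : ℝ) • (eigenMatrix p μ)ᵀ) u)) ∂measU (p + 2) n μ := by
    rw [← integral_integral_mixture_mul_log_eq_measU hσ0 hμ0 (by rw [hμ]; field_simp),
      ← integral_neg, integral_gaussianRows_eq fun _ => hs0]
    simp only [hH, hhEnt, hmix, isoGaussianPDF, Fintype.card_fin, NNReal.coe_pow]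
  simp only [hspectral, log_meanGaussianPDF_smul_eigenMatrix hσ0 hμ]
  rw [integral_add (integrable_log_isoGaussianPDF_sub_commonForm _ μ) hInt3,
    integral_log_isoGaussianPDF_sub_commonForm hσ0 hμ0, hS]
  ring

end
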